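/- arXiv:1802.05249 — 5 statements merged into one kernel-verified Lean document; each statement's English description precedes it below -/
import Mathlib

section
/- Let n ≥ 1 be an integer, ρ ≥ 0, B > 0, and let z ∈ ℝⁿ satisfy 0 ≤ z_i ≤ B for all i. Let z̄_n and s_n² be the mean and sample variance of z, and let OPT = inf_{p ∈ P_{ρ,n}} ∑_{i=1}^n p_i z_i. Then max(0, √(2ρ s_n² / n) − 2Bρ/n) ≤ z̄_n − OPT ≤ √(2ρ s_n² / n). -/
/-- The χ² uncertainty set `P_{ρ,n}`. -/
def chiSqBall (n : ℕ) (ρ : ℝ) : Set (Fin n → ℝ) :=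
  {p | (∀ i, 0 ≤ p i) ∧ (∑ i, p i = 1) ∧ (1/2) * ∑ i, ((n : ℝ) * p i - 1)^2 ≤ ρ}

/-- Mean of a vector. -/
noncomputable def vecMean {n : ℕ} (z : Fin n → ℝ) : ℝ := (∑ i, z i) / n

/-- Biased sample variance of a vector. -/
noncomputable def vecVar {n : ℕ} (z : Fin n → ℝ) : ℝ := (∑ i, (z i - vecMean z)^2) / n

/-- `OPT = inf_{p ∈ P_{ρ,n}} ∑ p_i z_i`. -/
noncomputable def droOPT (n : ℕ) (ρ : ℝ) (z : Fin n → ℝ) : ℝ :=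
  sInf ((fun p => ∑ i, p i * z i) '' chiSqBall n ρ)

/-!
For `p` in the uncertainty set, `n (∑ pᵢ zᵢ - z̄) = ∑ (n pᵢ - 1) (zᵢ - z̄)`, so Cauchy–Schwarz
bounds the deviation of `∑ pᵢ zᵢ` from `z̄` by `√(2ρs²/n)`. Equality forces
`n pᵢ - 1 = -t (zᵢ - z̄)`, and these weights lower the mean by `t s²`; they are nonnegative as soon
as `t (zᵢ - z̄) ≤ 1`. With the extremal `t = √(2ρ/(n s²))` this holds whenever `2ρB² ≤ n s²`, and
then the upper bound is attained. In the opposite case `√(2ρs²/n) ≤ 2Bρ/n`, so the lower bound only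
says that the mean is at least the optimum.
-/

section Moments

variable {n : ℕ} (z : Fin n → ℝ)

theorem natCast_mul_vecMean : n * vecMean z = ∑ i, z i := by
  rcases eq_or_ne n 0 with rfl | hn
  · simp
  · exact mul_div_cancel₀ _ (Nat.cast_ne_zero.2 hn)

theorem natCast_mul_vecVar : n * vecVar z = ∑ i, (z i - vecMean z) ^ 2 := by
  rcases eq_or_ne n 0 with rfl | hn
  · simp
  · exact mul_div_cancel₀ _ (Nat.cast_ne_zero.2 hn)

theorem vecMean_nonneg {z : Fin n → ℝ} (hz : ∀ i, 0 ≤ z i) : 0 ≤ vecMean z :=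
  div_nonneg (Finset.sum_nonneg fun i _ => hz i) n.cast_nonneg

theorem vecVar_nonneg : 0 ≤ vecVar z :=
  div_nonneg (Finset.sum_nonneg fun _ _ => sq_nonneg _) n.cast_nonneg

theorem sum_sub_vecMean : ∑ i, (z i - vecMean z) = 0 := by
  simp [Finset.sum_sub_distrib, natCast_mul_vecMean]

theorem exists_vecMean_le [NeZero n] : ∃ i, vecMean z ≤ z i := by
  obtain ⟨i, -, hi⟩ := Finset.exists_le_of_sum_le (s := Finset.univ) (f := fun _ => vecMean z)
    (g := z) Finset.univ_nonempty (by simp [natCast_mul_vecMean])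
  exact ⟨i, hi⟩

theorem sum_natCast_mul_sub_one_mul_sub_vecMean {p : Fin n → ℝ} (hp : ∑ i, p i = 1) :
    ∑ i, (n * p i - 1) * (z i - vecMean z) = n * (∑ i, p i * z i - vecMean z) :=
  calc ∑ i, (n * p i - 1) * (z i - vecMean z)
      = ∑ i, (n * (p i * z i) - n * vecMean z * p i - (z i - vecMean z)) :=
        Finset.sum_congr rfl fun i _ => by ring
    _ = n * ∑ i, p i * z i - n * vecMean z * ∑ i, p i - ∑ i, (z i - vecMean z) := by
        simp only [Finset.sum_sub_distrib, Finset.mul_sum]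
    _ = n * (∑ i, p i * z i - vecMean z) := by
        rw [hp, sum_sub_vecMean]; ring

end Moments

section UpperBound

variable {n : ℕ} {ρ : ℝ} {p : Fin n → ℝ}

theorem natCast_pos_of_mem_chiSqBall (hp : p ∈ chiSqBall n ρ) : (0 : ℝ) < n := by
  rcases n.eq_zero_or_pos with rfl | hn
  · simpa using hp.2.1
  · exact Nat.cast_pos.2 hn

theorem abs_sum_mul_sub_vecMean_le_sqrt (z : Fin n → ℝ) (hp : p ∈ chiSqBall n ρ) :
    |∑ i, p i * z i - vecMean z| ≤ √(2 * ρ * vecVar z / n) := by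
  have hn := natCast_pos_of_mem_chiSqBall hp
  obtain ⟨-, hp_sum, hp_chiSq⟩ := hp
  have cauchy_schwarz : (n * (∑ i, p i * z i - vecMean z)) ^ 2 ≤ 2 * ρ * (n * vecVar z) :=
    calc (n * (∑ i, p i * z i - vecMean z)) ^ 2
        = (∑ i, (n * p i - 1) * (z i - vecMean z)) ^ 2 := by
          rw [sum_natCast_mul_sub_one_mul_sub_vecMean z hp_sum]
      _ ≤ (∑ i, (n * p i - 1) ^ 2) * ∑ i, (z i - vecMean z) ^ 2 :=
          Finset.sum_mul_sq_le_sq_mul_sq _ _ _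
      _ ≤ 2 * ρ * (n * vecVar z) := by
          rw [natCast_mul_vecVar]
          gcongr
          linarith
  apply Real.abs_le_sqrt
  rw [le_div_iff₀ hn]
  exact le_of_mul_le_mul_left (by linarith) hn

theorem vecMean_sub_sqrt_le_sum_mul (z : Fin n → ℝ) (hp : p ∈ chiSqBall n ρ) :
    vecMean z - √(2 * ρ * vecVar z / n) ≤ ∑ i, p i * z i := by
  linarith [neg_le_of_abs_le (abs_sum_mul_sub_vecMean_le_sqrt z hp)]

theorem droOPT_le_sum_mul (z : Fin n → ℝ) (hp : p ∈ chiSqBall n ρ) :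
    droOPT n ρ z ≤ ∑ i, p i * z i :=
  csInf_le ⟨_, Set.forall_mem_image.2 fun _ => vecMean_sub_sqrt_le_sum_mul z⟩
    (Set.mem_image_of_mem _ hp)

end UpperBound

/-- The weights `pᵢ = (1 - t (zᵢ - z̄)) / n`, obtained from the uniform ones (for `t ≥ 0`) by
moving mass away from the large entries of `z`. They are the equality case of the Cauchy–Schwarz
bound on `z̄ - ∑ pᵢ zᵢ`, and need not be nonnegative when `t` is large. -/
noncomputable def tiltedWeights {n : ℕ} (z : Fin n → ℝ) (t : ℝ) (i : Fin n) : ℝ :=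
  (1 - t * (z i - vecMean z)) / n

section TiltedWeights

variable {n : ℕ} [NeZero n] {ρ t : ℝ} (z : Fin n → ℝ)

theorem natCast_mul_tiltedWeights_sub_one (t : ℝ) (i : Fin n) :
    n * tiltedWeights z t i - 1 = -(t * (z i - vecMean z)) := by
  rw [tiltedWeights, mul_div_cancel₀ _ (NeZero.ne (n : ℝ))]
  ring

theorem sum_tiltedWeights (t : ℝ) : ∑ i, tiltedWeights z t i = 1 := by
  simp only [tiltedWeights]
  rw [← Finset.sum_div, Finset.sum_sub_distrib, ← Finset.mul_sum, sum_sub_vecMean]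
  simp

theorem sum_tiltedWeights_mul (t : ℝ) :
    ∑ i, tiltedWeights z t i * z i = vecMean z - t * vecVar z := by
  have h : n * (∑ i, tiltedWeights z t i * z i - vecMean z) = n * -(t * vecVar z) :=
    calc n * (∑ i, tiltedWeights z t i * z i - vecMean z)
        = ∑ i, (n * tiltedWeights z t i - 1) * (z i - vecMean z) :=
          (sum_natCast_mul_sub_one_mul_sub_vecMean z (sum_tiltedWeights z t)).symm
      _ = ∑ i, -t * (z i - vecMean z) ^ 2 :=
          Finset.sum_congr rfl fun i _ => by rw [natCast_mul_tiltedWeights_sub_one]; ring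
      _ = n * -(t * vecVar z) := by
          rw [← Finset.mul_sum, ← natCast_mul_vecVar]; ring
  linarith [mul_left_cancel₀ (NeZero.ne (n : ℝ)) h]

variable {z}

theorem tiltedWeights_mem_chiSqBall (ht : ∀ i, t * (z i - vecMean z) ≤ 1)
    (htρ : t ^ 2 * (n * vecVar z) ≤ 2 * ρ) : tiltedWeights z t ∈ chiSqBall n ρ := by
  refine ⟨fun i => div_nonneg (sub_nonneg.2 (ht i)) n.cast_nonneg, sum_tiltedWeights z t, ?_⟩
  simp only [natCast_mul_tiltedWeights_sub_one, neg_sq, mul_pow]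
  rw [← Finset.mul_sum, ← natCast_mul_vecVar]
  linarith

theorem mul_vecVar_le_vecMean_sub_droOPT (ht : ∀ i, t * (z i - vecMean z) ≤ 1)
    (htρ : t ^ 2 * (n * vecVar z) ≤ 2 * ρ) : t * vecVar z ≤ vecMean z - droOPT n ρ z := by
  have h := droOPT_le_sum_mul z (tiltedWeights_mem_chiSqBall ht htρ)
  rw [sum_tiltedWeights_mul] at h
  linarith

end TiltedWeights

section OptimalityGap

variable {n : ℕ} [NeZero n] {ρ B : ℝ} (z : Fin n → ℝ)

theorem vecMean_sub_droOPT_nonneg (hρ : 0 ≤ ρ) : 0 ≤ vecMean z - droOPT n ρ z := by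
  simpa using mul_vecVar_le_vecMean_sub_droOPT (z := z) (ρ := ρ) (t := 0) (by simp) (by simpa)

theorem vecMean_sub_droOPT_le_sqrt (hρ : 0 ≤ ρ) :
    vecMean z - droOPT n ρ z ≤ √(2 * ρ * vecVar z / n) := by
  have uniform_mem : tiltedWeights z 0 ∈ chiSqBall n ρ :=
    tiltedWeights_mem_chiSqBall (by simp) (by simpa)
  have h : vecMean z - √(2 * ρ * vecVar z / n) ≤ droOPT n ρ z :=
    le_csInf (Set.Nonempty.image _ ⟨_, uniform_mem⟩)
      (Set.forall_mem_image.2 fun _ => vecMean_sub_sqrt_le_sum_mul z)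
  linarith

variable {z}

theorem vecMean_sub_droOPT_eq_sqrt (hρ : 0 ≤ ρ) (hz : ∀ i, z i - vecMean z ≤ B)
    (hB : 2 * ρ * B ^ 2 ≤ n * vecVar z) :
    vecMean z - droOPT n ρ z = √(2 * ρ * vecVar z / n) := by
  have hs := vecVar_nonneg z
  -- When `vecVar z = 0`, division by zero makes `t = 0`, which is still a valid choice.
  set t := √(2 * ρ / (n * vecVar z)) with ht_def
  have ht_sq : t ^ 2 = 2 * ρ / (n * vecVar z) := Real.sq_sqrt (by positivity)
  have htB : t * B ≤ 1 := by
    refine (abs_le_of_sq_le_sq' ?_ zero_le_one).2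
    rw [mul_pow, ht_sq, div_mul_eq_mul_div, one_pow]
    exact div_le_one_of_le₀ hB (by positivity)
  have ht_le_one : ∀ i, t * (z i - vecMean z) ≤ 1 := fun i =>
    (mul_le_mul_of_nonneg_left (hz i) (Real.sqrt_nonneg _)).trans htB
  have htρ : t ^ 2 * (n * vecVar z) ≤ 2 * ρ :=
    mul_le_of_le_div₀ (by positivity) (by positivity) ht_sq.le
  have ht_gap : √(2 * ρ * vecVar z / n) = t * vecVar z := by
    rw [ht_def, ← Real.sqrt_mul_self hs, ← Real.sqrt_mul (by positivity), Real.sqrt_mul_self hs]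
    congr 1
    field_simp
  exact (vecMean_sub_droOPT_le_sqrt z hρ).antisymm
    (ht_gap ▸ mul_vecVar_le_vecMean_sub_droOPT ht_le_one htρ)

theorem sqrt_mul_vecVar_div_le (hρ : 0 ≤ ρ) (hB : 0 ≤ B) (h : n * vecVar z ≤ 2 * ρ * B ^ 2) :
    √(2 * ρ * vecVar z / n) ≤ 2 * B * ρ / n := by
  refine Real.sqrt_le_iff.2 ⟨by positivity, ?_⟩
  calc 2 * ρ * vecVar z / n = 2 * ρ * (n * vecVar z) / n ^ 2 := by
        field_simp [NeZero.ne (n : ℝ)]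
    _ ≤ 2 * ρ * (2 * ρ * B ^ 2) / n ^ 2 := by gcongr
    _ = (2 * B * ρ / n) ^ 2 := by ring

theorem sqrt_sub_le_vecMean_sub_droOPT (hρ : 0 ≤ ρ) (hz : ∀ i, z i - vecMean z ≤ B) :
    √(2 * ρ * vecVar z / n) - 2 * B * ρ / n ≤ vecMean z - droOPT n ρ z := by
  obtain ⟨i, hi⟩ := exists_vecMean_le z
  have hB : 0 ≤ B := (sub_nonneg.2 hi).trans (hz i)
  rcases le_total (2 * ρ * B ^ 2) (n * vecVar z) with large_var | small_var
  · rw [vecMean_sub_droOPT_eq_sqrt hρ hz large_var]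
    exact sub_le_self _ (by positivity)
  · exact (sub_nonpos.2 (sqrt_mul_vecVar_div_le hρ hB small_var)).trans
      (vecMean_sub_droOPT_nonneg z hρ)

end OptimalityGap

theorem stmt0_general (n : ℕ) (hn : 1 ≤ n) (ρ B : ℝ) (hρ : 0 ≤ ρ) (z : Fin n → ℝ)
    (hz : ∀ i, z i - vecMean z ≤ B) :
    max 0 (√(2 * ρ * vecVar z / n) - 2 * B * ρ / n) ≤ vecMean z - droOPT n ρ z ∧
      vecMean z - droOPT n ρ z ≤ √(2 * ρ * vecVar z / n) := by
  have : NeZero n := .of_pos hn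
  exact ⟨max_le (vecMean_sub_droOPT_nonneg z hρ) (sqrt_sub_le_vecMean_sub_droOPT hρ hz),
    vecMean_sub_droOPT_le_sqrt z hρ⟩

theorem stmt0 (n : ℕ) (hn : 1 ≤ n) (ρ B : ℝ) (hρ : 0 ≤ ρ) (hB : 0 < B)
    (z : Fin n → ℝ) (hz : ∀ i, 0 ≤ z i ∧ z i ≤ B) :
    max 0 (Real.sqrt (2 * ρ * vecVar z / n) - 2 * B * ρ / n) ≤ vecMean z - droOPT n ρ z ∧
      vecMean z - droOPT n ρ z ≤ Real.sqrt (2 * ρ * vecVar z / n) :=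
  stmt0_general n hn ρ B hρ z fun i => by
    linarith [(hz i).2, vecMean_nonneg fun i => (hz i).1]
end

section
/- Fix an integer n ≥ 2, reals ρ > 0 and B > 0, and define h : ℝⁿ → ℝ by h(z) = min_{p ∈ P_{ρ,n}} ∑_{i=1}^n p_i z_i. Let K = {z ∈ [0,B]ⁿ : s_n²(z) ≥ 2ρB²/n}, the set of points satisfying the high sample variance condition. Then h is Fréchet differentiable at every z ∈ K, and the gradient map z ↦ ∇h(z) is Lipschitz on K (with respect to the Euclidean norm) with Lipschitz constant at most 2√(2ρ)/n^{3/2} + 2/(Bn). -/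
/-- The robust objective `h(z) = min_{p ∈ P_{ρ,n}} ⟨z, p⟩` on Euclidean space. -/
noncomputable def hFun (n : ℕ) (ρ : ℝ) (z : EuclideanSpace ℝ (Fin n)) : ℝ :=
  sInf ((fun p => ∑ i, p i * z i) '' chiSqBall n ρ)

/-!
Write `C z` for the vector of deviations of `z` from its mean. By Cauchy-Schwarz, the minimum of
`⟨p, z⟩` over the vectors `p` of total mass one with `½ ‖n p - 1‖² ≤ ρ` is attained at
`p(z) = (1 - √(2ρ) C z / ‖C z‖) / n`. As soon as `√(2ρ) (C z)ᵢ < ‖C z‖` for all `i`, this vector is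
positive near `z`, so that `h(z) = ⟨p(z), z⟩` there. Then `p(z)` is a supergradient of `h` depending
continuously on `z`, hence it is the gradient of `h`. High sample variance says
`‖C z‖ ≥ √(2ρ) B`; outside the ball of radius `r` the normalization `x ↦ x / ‖x‖` is
`r⁻¹`-Lipschitz, which makes `p` Lipschitz with constant `1 / (B n)`.
-/

open Filter Topology NormedSpace

section NormedSpace

variable {E : Type*} [NormedAddCommGroup E] [NormedSpace ℝ E]

lemma hasFDerivAt_of_eventually_supergradient {f : E → ℝ} {g : E → StrongDual ℝ E} {z : E}
    (hfg : ∀ᶠ x in 𝓝 z, ∀ y, f y ≤ f x + g x (y - x)) (hg : ContinuousAt g z) :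
    HasFDerivAt f (g z) z := by
  rw [hasFDerivAt_iff_isLittleO, Asymptotics.isLittleO_iff]
  intro c hc
  filter_upwards [hfg, Metric.continuousAt_iff'.1 hg c hc] with x hx hgx
  have hupper : f x ≤ f z + g z (x - z) := hfg.self_of_nhds x
  have hlower : f z ≤ f x - g x (x - z) := by
    simpa only [← neg_sub x z, map_neg, ← sub_eq_add_neg] using hx z
  have hclose : |g x (x - z) - g z (x - z)| ≤ c * ‖x - z‖ := by
    rw [dist_eq_norm] at hgx
    exact (g x - g z).le_of_opNorm_le hgx.le (x - z)
  rw [Real.norm_eq_abs, abs_le]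
  constructor <;> linarith [abs_le.1 hclose]

lemma norm_normalize_le_one (x : E) : ‖normalize x‖ ≤ 1 := by
  rw [NormedSpace.normalize, norm_smul, norm_inv, norm_norm]
  exact inv_mul_le_one

lemma continuousAt_normalize {x : E} (hx : x ≠ 0) : ContinuousAt (normalize : E → E) x :=
  (continuousAt_id.norm.inv₀ (norm_ne_zero_iff.2 hx)).smul continuousAt_id

end NormedSpace

section InnerProductSpace

variable {E : Type*} [NormedAddCommGroup E] [InnerProductSpace ℝ E]

lemma real_inner_normalize_self (x : E) : inner ℝ (normalize x) x = ‖x‖ := by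
  rcases eq_or_ne x 0 with rfl | hx
  · simp
  · rw [NormedSpace.normalize, real_inner_smul_left, real_inner_self_eq_norm_sq]
    field_simp

lemma norm_mul_norm_mul_norm_normalize_sub_sq_le (x y : E) :
    ‖x‖ * ‖y‖ * ‖normalize x - normalize y‖ ^ 2 ≤ ‖x - y‖ ^ 2 := by
  rcases eq_or_ne x 0 with rfl | hx
  · simp
  rcases eq_or_ne y 0 with rfl | hy
  · simp
  have hinner : ‖x‖ * ‖y‖ * inner ℝ (normalize x) (normalize y) = inner ℝ x y := by
    rw [NormedSpace.normalize, NormedSpace.normalize, real_inner_smul_left, real_inner_smul_right]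
    field_simp
  rw [norm_sub_sq_real, norm_sub_sq_real, norm_normalize hx, norm_normalize hy]
  linarith [sq_nonneg (‖x‖ - ‖y‖)]

lemma norm_normalize_sub_normalize_le {x y : E} {r : ℝ} (hr : 0 < r) (hx : r ≤ ‖x‖)
    (hy : r ≤ ‖y‖) : ‖normalize x - normalize y‖ ≤ ‖x - y‖ / r := by
  rw [le_div_iff₀' hr]
  refine le_of_sq_le_sq ?_ (norm_nonneg _)
  calc (r * ‖normalize x - normalize y‖) ^ 2
      = r * r * ‖normalize x - normalize y‖ ^ 2 := by ring
    _ ≤ ‖x‖ * ‖y‖ * ‖normalize x - normalize y‖ ^ 2 := by gcongr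
    _ ≤ ‖x - y‖ ^ 2 := norm_mul_norm_mul_norm_normalize_sub_sq_le x y

end InnerProductSpace

section Centering

variable {n : ℕ}

/-- The orthogonal projection of `ℝⁿ` onto the complement of the constant vectors, which replaces
each coordinate by its deviation from the mean. -/
noncomputable def centering (n : ℕ) : EuclideanSpace ℝ (Fin n) →L[ℝ] EuclideanSpace ℝ (Fin n) :=
  (ℝ ∙ (WithLp.toLp 2 1 : EuclideanSpace ℝ (Fin n)))ᗮ.starProjection

lemma centering_apply (z : EuclideanSpace ℝ (Fin n)) (i : Fin n) :
    centering n z i = z i - vecMean (fun j => z j) := by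
  simp [centering, Submodule.starProjection_orthogonal', Submodule.starProjection_singleton,
    vecMean, PiLp.inner_apply, EuclideanSpace.real_norm_sq_eq]

lemma sum_centering (z : EuclideanSpace ℝ (Fin n)) : ∑ i, centering n z i = 0 := by
  have horth : inner ℝ (WithLp.toLp 2 1) (centering n z) = 0 :=
    Submodule.mem_orthogonal_singleton_iff_inner_right.1
      (Submodule.starProjection_apply_mem _ z)
  simpa [PiLp.inner_apply] using horth

lemma norm_centering_le (z : EuclideanSpace ℝ (Fin n)) : ‖centering n z‖ ≤ ‖z‖ :=
  Submodule.norm_starProjection_apply_le _ z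

lemma norm_centering_sq [NeZero n] (z : EuclideanSpace ℝ (Fin n)) :
    ‖centering n z‖ ^ 2 = n * vecVar (fun i => z i) := by
  simp only [EuclideanSpace.real_norm_sq_eq, centering_apply, vecVar]
  rw [mul_div_cancel₀ _ (NeZero.ne (n : ℝ))]

lemma sqrt_mul_le_norm_centering [NeZero n] {ρ B : ℝ} (hρ : 0 ≤ ρ)
    {z : EuclideanSpace ℝ (Fin n)} (hz : 2 * ρ * B ^ 2 / n ≤ vecVar (fun i => z i)) :
    √(2 * ρ) * B ≤ ‖centering n z‖ := by
  refine le_of_sq_le_sq ?_ (norm_nonneg _)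
  rw [mul_pow, Real.sq_sqrt (by positivity), norm_centering_sq]
  exact (div_le_iff₀' (by simp [NeZero.pos])).1 hz

lemma sum_mul_eq_vecMean_add {q : Fin n → ℝ} (hq : ∑ i, q i = 1)
    (z : EuclideanSpace ℝ (Fin n)) :
    ∑ i, q i * z i = vecMean (fun i => z i) + ∑ i, q i * centering n z i := by
  simp only [centering_apply, mul_sub, Finset.sum_sub_distrib, ← Finset.sum_mul, hq]
  ring

end Centering

section ChiSqMinimizer

variable {n : ℕ} {ρ : ℝ}

/-- The minimizer of `p ↦ ⟨p, z⟩` over the vectors `p` with `∑ i, p i = 1` and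
`½ ‖n p - 1‖² ≤ ρ`, whose coordinates may be negative. For constant `z` it is the uniform
distribution, because `normalize 0 = 0`. -/
noncomputable def chiSqMinimizer (ρ : ℝ) (z : EuclideanSpace ℝ (Fin n)) :
    EuclideanSpace ℝ (Fin n) :=
  (n : ℝ)⁻¹ • (WithLp.toLp 2 1 - √(2 * ρ) • normalize (centering n z))

lemma chiSqMinimizer_apply (z : EuclideanSpace ℝ (Fin n)) (i : Fin n) :
    chiSqMinimizer ρ z i = (1 - √(2 * ρ) * normalize (centering n z) i) / n := by
  simp [chiSqMinimizer, div_eq_inv_mul]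

lemma sum_normalize_centering (z : EuclideanSpace ℝ (Fin n)) :
    ∑ i, normalize (centering n z) i = 0 := by
  simp [NormedSpace.normalize, ← Finset.mul_sum, sum_centering]

lemma sum_chiSqMinimizer [NeZero n] (z : EuclideanSpace ℝ (Fin n)) :
    ∑ i, chiSqMinimizer ρ z i = 1 := by
  simp [chiSqMinimizer_apply, ← Finset.sum_div, ← Finset.mul_sum, sum_normalize_centering]

lemma sum_chiSqMinimizer_mul [NeZero n] (z : EuclideanSpace ℝ (Fin n)) :
    ∑ i, chiSqMinimizer ρ z i * z i =
      vecMean (fun i => z i) - √(2 * ρ) * ‖centering n z‖ / n := by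
  have hnorm : ∑ i, normalize (centering n z) i * centering n z i = ‖centering n z‖ := by
    rw [← real_inner_normalize_self, PiLp.inner_apply]
    simp [mul_comm]
  have hterm (i : Fin n) : chiSqMinimizer ρ z i * centering n z i =
      (centering n z i - √(2 * ρ) * (normalize (centering n z) i * centering n z i)) / n := by
    rw [chiSqMinimizer_apply]
    ring
  rw [sum_mul_eq_vecMean_add (sum_chiSqMinimizer z)]
  simp only [hterm]
  rw [← Finset.sum_div, Finset.sum_sub_distrib, sum_centering, ← Finset.mul_sum, hnorm]
  ring

lemma chiSqMinimizer_mem_chiSqBall [NeZero n] (hρ : 0 ≤ ρ) {z : EuclideanSpace ℝ (Fin n)}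
    (hz : ∀ i, √(2 * ρ) * centering n z i ≤ ‖centering n z‖) :
    (fun i => chiSqMinimizer ρ z i) ∈ chiSqBall n ρ := by
  refine ⟨fun i => ?_, sum_chiSqMinimizer z, ?_⟩
  · have hle : √(2 * ρ) * normalize (centering n z) i ≤ 1 := by
      simpa [NormedSpace.normalize, div_eq_inv_mul, mul_left_comm] using
        div_le_one_of_le₀ (hz i) (norm_nonneg _)
    simp only [chiSqMinimizer_apply]
    exact div_nonneg (sub_nonneg.2 hle) n.cast_nonneg
  · have hdev (i : Fin n) : ((n : ℝ) * chiSqMinimizer ρ z i - 1) ^ 2 =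
        2 * ρ * normalize (centering n z) i ^ 2 := by
      rw [chiSqMinimizer_apply, mul_div_cancel₀ _ (NeZero.ne (n : ℝ)), sub_sub_cancel_left,
        neg_sq, mul_pow, Real.sq_sqrt (by positivity)]
    have hunit : ‖normalize (centering n z)‖ ^ 2 ≤ 1 := by
      simpa using norm_normalize_le_one (centering n z)
    simp only [hdev]
    rw [← Finset.mul_sum, ← EuclideanSpace.real_norm_sq_eq, ← mul_assoc]
    calc 1 / 2 * (2 * ρ) * ‖normalize (centering n z)‖ ^ 2 ≤ 1 / 2 * (2 * ρ) * 1 := by gcongr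
      _ = ρ := by ring

lemma sum_chiSqMinimizer_mul_le [NeZero n] {q : Fin n → ℝ} (hq : q ∈ chiSqBall n ρ)
    (z : EuclideanSpace ℝ (Fin n)) :
    ∑ i, chiSqMinimizer ρ z i * z i ≤ ∑ i, q i * z i := by
  obtain ⟨-, hq_sum, hq_dev⟩ := hq
  let u : EuclideanSpace ℝ (Fin n) := WithLp.toLp 2 fun i => n * q i - 1
  have hu : ‖u‖ ≤ √(2 * ρ) := by
    refine Real.le_sqrt_of_sq_le ?_
    rw [EuclideanSpace.real_norm_sq_eq]
    linarith
  have hinner : inner ℝ u (centering n z) = n * ∑ i, q i * centering n z i := by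
    simp only [u, PiLp.inner_apply, RCLike.inner_apply', conj_trivial, sub_mul, one_mul, mul_assoc,
      Finset.sum_sub_distrib, sum_centering, sub_zero, Finset.mul_sum]
  have hcs : -(√(2 * ρ) * ‖centering n z‖) ≤ inner ℝ u (centering n z) :=
    calc -(√(2 * ρ) * ‖centering n z‖) ≤ -(‖u‖ * ‖centering n z‖) := by gcongr
      _ ≤ inner ℝ u (centering n z) := (abs_le.1 (abs_real_inner_le_norm _ _)).1
  rw [sum_chiSqMinimizer_mul, sum_mul_eq_vecMean_add hq_sum, sub_eq_add_neg, ← neg_div]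
  gcongr
  rw [div_le_iff₀' (by simp [NeZero.pos])]
  exact hcs.trans_eq hinner

lemma norm_chiSqMinimizer_sub_le {r : ℝ} (hr : 0 < r) {z w : EuclideanSpace ℝ (Fin n)}
    (hz : r ≤ ‖centering n z‖) (hw : r ≤ ‖centering n w‖) :
    ‖chiSqMinimizer ρ z - chiSqMinimizer ρ w‖ ≤ √(2 * ρ) / (r * n) * ‖z - w‖ := by
  have hnormalize : ‖normalize (centering n w) - normalize (centering n z)‖ ≤ ‖z - w‖ / r :=
    calc _ ≤ ‖centering n w - centering n z‖ / r := norm_normalize_sub_normalize_le hr hw hz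
      _ ≤ ‖z - w‖ / r := by
        gcongr
        rw [← map_sub, norm_sub_rev z w]
        exact norm_centering_le _
  calc ‖chiSqMinimizer ρ z - chiSqMinimizer ρ w‖
      = (n : ℝ)⁻¹ * (√(2 * ρ) * ‖normalize (centering n w) - normalize (centering n z)‖) := by
        rw [chiSqMinimizer, chiSqMinimizer, ← smul_sub, sub_sub_sub_cancel_left, ← smul_sub,
          norm_smul, norm_smul, Real.norm_of_nonneg (by positivity),
          Real.norm_of_nonneg (by positivity)]
    _ ≤ (n : ℝ)⁻¹ * (√(2 * ρ) * (‖z - w‖ / r)) := by gcongr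
    _ = √(2 * ρ) / (r * n) * ‖z - w‖ := by field_simp

lemma continuousAt_chiSqMinimizer {z : EuclideanSpace ℝ (Fin n)} (hz : centering n z ≠ 0) :
    ContinuousAt (chiSqMinimizer ρ) z := by
  have hnormalize : ContinuousAt (fun x => normalize (centering n x)) z :=
    (continuousAt_normalize hz).comp (centering n).continuous.continuousAt
  unfold chiSqMinimizer
  fun_prop

end ChiSqMinimizer

section RobustObjective

variable {n : ℕ} [NeZero n] {ρ : ℝ} {z : EuclideanSpace ℝ (Fin n)}

lemma hFun_le {q : Fin n → ℝ} (hq : q ∈ chiSqBall n ρ) (y : EuclideanSpace ℝ (Fin n)) :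
    hFun n ρ y ≤ ∑ i, q i * y i := by
  refine csInf_le ⟨∑ i, chiSqMinimizer ρ y i * y i, ?_⟩ (Set.mem_image_of_mem _ hq)
  rintro _ ⟨p, hp, rfl⟩
  exact sum_chiSqMinimizer_mul_le hp y

lemma hFun_eq_sum_chiSqMinimizer_mul (hρ : 0 ≤ ρ)
    (hz : ∀ i, √(2 * ρ) * centering n z i ≤ ‖centering n z‖) :
    hFun n ρ z = ∑ i, chiSqMinimizer ρ z i * z i := by
  have hmem := chiSqMinimizer_mem_chiSqBall hρ hz
  refine le_antisymm (hFun_le hmem z) (le_csInf (Set.Nonempty.image _ ⟨_, hmem⟩) ?_)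
  rintro _ ⟨q, hq, rfl⟩
  exact sum_chiSqMinimizer_mul_le hq z

lemma hFun_le_add_inner (hρ : 0 ≤ ρ)
    (hz : ∀ i, √(2 * ρ) * centering n z i ≤ ‖centering n z‖) (y : EuclideanSpace ℝ (Fin n)) :
    hFun n ρ y ≤ hFun n ρ z + inner ℝ (chiSqMinimizer ρ z) (y - z) := by
  have hinner (x : EuclideanSpace ℝ (Fin n)) :
      inner ℝ (chiSqMinimizer ρ z) x = ∑ i, chiSqMinimizer ρ z i * x i := by
    simp [PiLp.inner_apply, mul_comm]
  rw [hFun_eq_sum_chiSqMinimizer_mul hρ hz, inner_sub_right, hinner, hinner, add_sub_cancel]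
  exact hFun_le (chiSqMinimizer_mem_chiSqBall hρ hz) y

lemma hasFDerivAt_hFun (hρ : 0 ≤ ρ)
    (hz : ∀ i, √(2 * ρ) * centering n z i < ‖centering n z‖) :
    HasFDerivAt (hFun n ρ) (innerSL ℝ (chiSqMinimizer ρ z)) z := by
  have hz_ne : centering n z ≠ 0 := fun h => by simpa [h] using hz 0
  have hev : ∀ᶠ x in 𝓝 z, ∀ i, √(2 * ρ) * centering n x i < ‖centering n x‖ :=
    eventually_all.2 fun i => ContinuousAt.eventually_lt (by fun_prop) (by fun_prop) (hz i)
  refine hasFDerivAt_of_eventually_supergradient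
    (g := fun x => innerSL ℝ (chiSqMinimizer ρ x)) ?_ ?_
  · filter_upwards [hev] with x hx
    exact hFun_le_add_inner hρ fun i => (hx i).le
  · exact (innerSL ℝ).continuous.continuousAt.comp (continuousAt_chiSqMinimizer hz_ne)

end RobustObjective

lemma lt_vecMean_add_of_mem_Icc {n : ℕ} {B : ℝ} (hB : 0 < B) {z : Fin n → ℝ}
    (hz : ∀ i, z i ∈ Set.Icc 0 B) (i : Fin n) : z i < vecMean z + B := by
  have hn : (0 : ℝ) < n := by exact_mod_cast i.pos
  have hle : z i ≤ ∑ j, z j :=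
    Finset.single_le_sum (fun j _ => (hz j).1) (Finset.mem_univ i)
  rcases (hz i).1.eq_or_lt with h0 | hpos
  · rw [← h0]
    exact add_pos_of_nonneg_of_pos (div_nonneg (h0.trans_le hle) hn.le) hB
  · exact lt_add_of_pos_of_le (div_pos (hpos.trans_le hle) hn) (hz i).2

theorem stmt7_general (n : ℕ) (hn : n ≠ 0) (ρ B : ℝ) (hρ : 0 < ρ) (hB : 0 < B) :
    (∀ z : EuclideanSpace ℝ (Fin n),
        (∀ i, z i < vecMean (fun j => z j) + B) → 2 * ρ * B ^ 2 / n ≤ vecVar (fun i => z i) →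
        DifferentiableAt ℝ (hFun n ρ) z) ∧
      ∀ z w : EuclideanSpace ℝ (Fin n),
        (∀ i, z i < vecMean (fun j => z j) + B) → 2 * ρ * B ^ 2 / n ≤ vecVar (fun i => z i) →
        (∀ i, w i < vecMean (fun j => w j) + B) → 2 * ρ * B ^ 2 / n ≤ vecVar (fun i => w i) →
        ‖fderiv ℝ (hFun n ρ) z - fderiv ℝ (hFun n ρ) w‖ ≤ 1 / (B * n) * ‖z - w‖ := by
  have : NeZero n := ⟨hn⟩
  have hderiv (z : EuclideanSpace ℝ (Fin n)) (hz : ∀ i, z i < vecMean (fun j => z j) + B)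
      (hz_var : 2 * ρ * B ^ 2 / n ≤ vecVar (fun i => z i)) :
      HasFDerivAt (hFun n ρ) (innerSL ℝ (chiSqMinimizer ρ z)) z := by
    refine hasFDerivAt_hFun hρ.le fun i => lt_of_lt_of_le ?_
      (sqrt_mul_le_norm_centering hρ.le hz_var)
    rw [centering_apply]
    gcongr
    exact sub_lt_iff_lt_add'.2 (hz i)
  refine ⟨fun z hz hz_var => (hderiv z hz hz_var).differentiableAt,
    fun z w hz hz_var hw hw_var => ?_⟩
  rw [(hderiv z hz hz_var).fderiv, (hderiv w hw hw_var).fderiv, ← map_sub, innerSL_apply_norm]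
  calc ‖chiSqMinimizer ρ z - chiSqMinimizer ρ w‖
      ≤ √(2 * ρ) / (√(2 * ρ) * B * n) * ‖z - w‖ :=
        norm_chiSqMinimizer_sub_le (by positivity) (sqrt_mul_le_norm_centering hρ.le hz_var)
          (sqrt_mul_le_norm_centering hρ.le hw_var)
    _ = 1 / (B * n) * ‖z - w‖ := by field_simp

theorem stmt7 (n : ℕ) (hn : 2 ≤ n) (ρ B : ℝ) (hρ : 0 < ρ) (hB : 0 < B) :
    (∀ z : EuclideanSpace ℝ (Fin n),
        (∀ i, z i ∈ Set.Icc 0 B) → 2 * ρ * B^2 / n ≤ vecVar (fun i => z i) →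
        DifferentiableAt ℝ (hFun n ρ) z) ∧
      ∀ z w : EuclideanSpace ℝ (Fin n),
        (∀ i, z i ∈ Set.Icc 0 B) → 2 * ρ * B^2 / n ≤ vecVar (fun i => z i) →
        (∀ i, w i ∈ Set.Icc 0 B) → 2 * ρ * B^2 / n ≤ vecVar (fun i => w i) →
        ‖fderiv ℝ (hFun n ρ) z - fderiv ℝ (hFun n ρ) w‖ ≤
          (2 * Real.sqrt (2 * ρ) / Real.sqrt ((n : ℝ)^3) + 2 / (B * n)) * ‖z - w‖ := by
  obtain ⟨hdiff, hlip⟩ := stmt7_general n (by lia) ρ B hρ hB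
  refine ⟨fun z hz => hdiff z (lt_vecMean_add_of_mem_Icc hB hz), fun z w hz hz_var hw hw_var =>
    (hlip z w (lt_vecMean_add_of_mem_Icc hB hz) hz_var
      (lt_vecMean_add_of_mem_Icc hB hw) hw_var).trans ?_⟩
  gcongr
  exact le_add_of_nonneg_of_le (by positivity) (by gcongr; norm_num)
end

section
/- Let n ≥ 1 be an integer, ρ ≥ 0, z ∈ ℝⁿ, and let k = |{i : z_i = min_j z_j}| be the number of indices attaining the minimum value of z. Then inf_{p ∈ P_{ρ,n}} ∑_{i=1}^n p_i z_i = min_j z_j if and only if ρ ≥ n(n−k)/(2k). Moreover, when ρ ≥ n(n−k)/(2k), the infimum is attained by the vector p placing mass 1/k on each index i with z_i = min_j z_j and 0 elsewhere, and this p satisfies (1/2)∑_{i=1}^n (n p_i − 1)² = n(n−k)/(2k). -/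
/-!
A probability vector `p` has `∑ pᵢ zᵢ = min z` exactly when it is supported on the set `s` of
minimisers of `z`. Since `P_{ρ,n}` is compact, the infimum equals `min z` if and only if
`P_{ρ,n}` contains a vector supported on `s`. By Cauchy–Schwarz, among the vectors supported on
`s` the uniform one has the least χ² divergence, namely `n (n - k) / (2 k)`.
-/

open Finset

section StdSimplex

variable {ι R : Type*} [Fintype ι] [Semiring R] {p z : ι → R} {m : R}

theorem le_sum_mul_of_mem_stdSimplex [PartialOrder R] [IsOrderedRing R]
    (hp : p ∈ stdSimplex R ι) (hz : ∀ i, m ≤ z i) :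
    m ≤ ∑ i, p i * z i :=
  calc m = ∑ i, p i * m := by rw [← sum_mul, hp.2, one_mul]
    _ ≤ ∑ i, p i * z i := sum_le_sum fun i _ => mul_le_mul_of_nonneg_left (hz i) (hp.1 i)

theorem sum_mul_eq_iff_of_mem_stdSimplex [IsLeftCancelMulZero R] [PartialOrder R]
    [IsStrictOrderedRing R] (hp : p ∈ stdSimplex R ι) (hz : ∀ i, m ≤ z i) :
    ∑ i, p i * z i = m ↔ ∀ i, z i ≠ m → p i = 0 :=
  calc ∑ i, p i * z i = m
      ↔ ∑ i, p i * m = ∑ i, p i * z i := by rw [← sum_mul, hp.2, one_mul, eq_comm]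
    _ ↔ ∀ i ∈ univ, p i * m = p i * z i :=
        sum_eq_sum_iff_of_le fun i _ => mul_le_mul_of_nonneg_left (hz i) (hp.1 i)
    _ ↔ ∀ i, z i ≠ m → p i = 0 := by
        simp only [mem_univ, forall_const, mul_eq_mul_left_iff, or_iff_not_imp_left, ne_eq,
          eq_comm (a := m)]

end StdSimplex

section CentroidWeights

variable {ι : Type*} {s : Finset ι}

theorem centroidWeightsIndicator_of_notMem (𝕜 : Type*) [DivisionRing 𝕜] {i : ι} (hi : i ∉ s) :
    s.centroidWeightsIndicator 𝕜 i = 0 :=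
  Set.indicator_of_notMem (mem_coe.not.2 hi) _

variable [Fintype ι]

-- For empty `s` both sides are zero, since `0⁻¹ = 0`.
theorem sum_centroidWeightsIndicator_sq (𝕜 : Type*) [DivisionRing 𝕜] (s : Finset ι) :
    ∑ i, s.centroidWeightsIndicator 𝕜 i ^ 2 = (#s : 𝕜)⁻¹ :=
  calc ∑ i, s.centroidWeightsIndicator 𝕜 i ^ 2
      = ∑ i ∈ s, s.centroidWeights 𝕜 i ^ 2 :=
        sum_indicator_subset_of_eq_zero _ (fun _ x => x ^ 2) (subset_univ s)
          fun _ => zero_pow two_ne_zero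
    _ = #s * (#s : 𝕜)⁻¹ ^ 2 := by
        simp only [centroidWeights_apply, sum_const, nsmul_eq_mul]
    _ = (#s : 𝕜)⁻¹ := by
        simpa only [sq, inv_inv, mul_assoc] using inv_mul_mul_self (#s : 𝕜)⁻¹

theorem centroidWeightsIndicator_mem_stdSimplex (𝕜 : Type*) [Field 𝕜] [LinearOrder 𝕜]
    [IsStrictOrderedRing 𝕜] (hs : s.Nonempty) : s.centroidWeightsIndicator 𝕜 ∈ stdSimplex 𝕜 ι :=
  ⟨Set.indicator_nonneg fun _ _ => inv_nonneg.2 (Nat.cast_nonneg _),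
    s.sum_centroidWeightsIndicator_eq_one_of_nonempty 𝕜 hs⟩

end CentroidWeights

section ChiSqDiv

variable {ι 𝕜 : Type*} [Fintype ι] [Field 𝕜] {p : ι → 𝕜} {s : Finset ι}

/-- The χ² divergence of the probability vector `p` from the uniform distribution, in the
normalisation that defines `chiSqBall`. -/
def chiSqDiv (p : ι → 𝕜) : 𝕜 :=
  (1 / 2) * ∑ i, ((Fintype.card ι : 𝕜) * p i - 1) ^ 2

theorem chiSqDiv_eq_of_sum_eq_one (hp : ∑ i, p i = 1) :
    chiSqDiv p = ((Fintype.card ι : 𝕜) ^ 2 * ∑ i, p i ^ 2 - Fintype.card ι) / 2 := by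
  simp only [chiSqDiv, sub_sq, mul_pow, mul_one, one_pow, sum_add_distrib,
    sum_sub_distrib, ← mul_sum, hp, sum_const, card_univ, nsmul_eq_mul]
  ring

theorem chiSqDiv_centroidWeightsIndicator [CharZero 𝕜] (hs : s.Nonempty) :
    chiSqDiv (s.centroidWeightsIndicator 𝕜) =
      (Fintype.card ι : 𝕜) * (Fintype.card ι - #s) / (2 * #s) := by
  have hcard : (#s : 𝕜) ≠ 0 := Nat.cast_ne_zero.2 hs.card_ne_zero
  rw [chiSqDiv_eq_of_sum_eq_one (s.sum_centroidWeightsIndicator_eq_one_of_nonempty 𝕜 hs),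
    sum_centroidWeightsIndicator_sq]
  field_simp

variable [LinearOrder 𝕜] [IsStrictOrderedRing 𝕜]

theorem inv_card_le_sum_sq (hp : ∑ i, p i = 1) (hps : ∀ i ∉ s, p i = 0) :
    (#s : 𝕜)⁻¹ ≤ ∑ i, p i ^ 2 := by
  have hsum : ∑ i ∈ s, p i = 1 :=
    (sum_subset (subset_univ s) fun i _ hi => hps i hi).trans hp
  rw [← one_div]
  refine div_le_of_le_mul₀ (Nat.cast_nonneg _) (sum_nonneg fun i _ => sq_nonneg _) ?_
  calc 1 = (∑ i ∈ s, p i) ^ 2 := by rw [hsum, one_pow]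
    _ ≤ #s * ∑ i ∈ s, p i ^ 2 := sq_sum_le_card_mul_sum_sq
    _ = (∑ i, p i ^ 2) * #s := by
        rw [mul_comm, sum_subset (subset_univ s) fun i _ hi => by rw [hps i hi, sq, zero_mul]]

theorem chiSqDiv_centroidWeightsIndicator_le (hs : s.Nonempty) (hp : ∑ i, p i = 1)
    (hps : ∀ i ∉ s, p i = 0) : chiSqDiv (s.centroidWeightsIndicator 𝕜) ≤ chiSqDiv p := by
  rw [chiSqDiv_eq_of_sum_eq_one (s.sum_centroidWeightsIndicator_eq_one_of_nonempty 𝕜 hs),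
    chiSqDiv_eq_of_sum_eq_one hp, sum_centroidWeightsIndicator_sq]
  gcongr
  exact inv_card_le_sum_sq hp hps

end ChiSqDiv

section ChiSqBall

variable {n : ℕ} {ρ : ℝ}

theorem mem_chiSqBall_iff {p : Fin n → ℝ} :
    p ∈ chiSqBall n ρ ↔ p ∈ stdSimplex ℝ (Fin n) ∧ chiSqDiv p ≤ ρ := by
  simp only [chiSqBall, stdSimplex, chiSqDiv, Set.mem_ofPred_eq, Fintype.card_fin, and_assoc]

theorem isCompact_chiSqBall (n : ℕ) (ρ : ℝ) : IsCompact (chiSqBall n ρ) := by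
  have hclosed : IsClosed {p : Fin n → ℝ | chiSqDiv p ≤ ρ} :=
    isClosed_le (by unfold chiSqDiv; fun_prop) continuous_const
  have heq : chiSqBall n ρ = stdSimplex ℝ (Fin n) ∩ {p | chiSqDiv p ≤ ρ} :=
    Set.ext fun _ => mem_chiSqBall_iff
  exact heq ▸ (isCompact_stdSimplex ℝ (Fin n)).inter_right hclosed

theorem centroidWeightsIndicator_mem_chiSqBall_iff {s : Finset (Fin n)} (hs : s.Nonempty) :
    s.centroidWeightsIndicator ℝ ∈ chiSqBall n ρ ↔ (n : ℝ) * (n - #s) / (2 * #s) ≤ ρ := by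
  rw [mem_chiSqBall_iff, and_iff_right (centroidWeightsIndicator_mem_stdSimplex ℝ hs),
    chiSqDiv_centroidWeightsIndicator hs, Fintype.card_fin]

theorem exists_mem_chiSqBall_forall_notMem_eq_zero_iff {s : Finset (Fin n)} (hs : s.Nonempty) :
    (∃ p ∈ chiSqBall n ρ, ∀ i ∉ s, p i = 0) ↔ s.centroidWeightsIndicator ℝ ∈ chiSqBall n ρ := by
  refine ⟨?_, fun h => ⟨_, h, fun _ => centroidWeightsIndicator_of_notMem ℝ⟩⟩
  rintro ⟨p, hp, hps⟩
  obtain ⟨hsimplex, hdiv⟩ := mem_chiSqBall_iff.1 hp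
  exact mem_chiSqBall_iff.2 ⟨centroidWeightsIndicator_mem_stdSimplex ℝ hs,
    (chiSqDiv_centroidWeightsIndicator_le hs hsimplex.2 hps).trans hdiv⟩

theorem nonempty_chiSqBall [NeZero n] (hρ : 0 ≤ ρ) : (chiSqBall n ρ).Nonempty :=
  ⟨_, (centroidWeightsIndicator_mem_chiSqBall_iff univ_nonempty).2 (by simpa using hρ)⟩

theorem isLeast_droOPT [NeZero n] (hρ : 0 ≤ ρ) (z : Fin n → ℝ) :
    IsLeast ((fun p => ∑ i, p i * z i) '' chiSqBall n ρ) (droOPT n ρ z) :=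
  ((isCompact_chiSqBall n ρ).image (by fun_prop)).isLeast_sInf ((nonempty_chiSqBall hρ).image _)

theorem droOPT_eq_iff_exists [NeZero n] (hρ : 0 ≤ ρ) {z : Fin n → ℝ} {m : ℝ}
    (hz : ∀ i, m ≤ z i) :
    droOPT n ρ z = m ↔ ∃ p ∈ chiSqBall n ρ, ∀ i, z i ≠ m → p i = 0 := by
  have hlower : m ∈ lowerBounds ((fun p => ∑ i, p i * z i) '' chiSqBall n ρ) := by
    rintro _ ⟨p, hp, rfl⟩
    exact le_sum_mul_of_mem_stdSimplex (mem_chiSqBall_iff.1 hp).1 hz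
  calc droOPT n ρ z = m
      ↔ m ∈ (fun p => ∑ i, p i * z i) '' chiSqBall n ρ :=
        ⟨fun h => h ▸ (isLeast_droOPT hρ z).1, fun h => (isLeast_droOPT hρ z).unique ⟨h, hlower⟩⟩
    _ ↔ ∃ p ∈ chiSqBall n ρ, ∀ i, z i ≠ m → p i = 0 :=
        exists_congr fun p => and_congr_right fun hp =>
          sum_mul_eq_iff_of_mem_stdSimplex (mem_chiSqBall_iff.1 hp).1 hz

end ChiSqBall

open Classical in
theorem stmt10 (n : ℕ) (hn : 1 ≤ n) (ρ : ℝ) (hρ : 0 ≤ ρ) (z : Fin n → ℝ)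
    (zmin : ℝ) (hzmin : zmin = Finset.univ.inf' ⟨⟨0, hn⟩, Finset.mem_univ _⟩ z)
    (k : ℕ) (hk : k = (Finset.univ.filter (fun i => z i = zmin)).card)
    (p : Fin n → ℝ) (hp : ∀ i, p i = if z i = zmin then 1 / (k : ℝ) else 0) :
    (droOPT n ρ z = zmin ↔ (n : ℝ) * ((n : ℝ) - k) / (2 * k) ≤ ρ) ∧
      ((n : ℝ) * ((n : ℝ) - k) / (2 * k) ≤ ρ →
        p ∈ chiSqBall n ρ ∧ (∑ i, p i * z i) = droOPT n ρ z ∧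
          (1/2) * ∑ i, ((n : ℝ) * p i - 1)^2 = (n : ℝ) * ((n : ℝ) - k) / (2 * k)) := by
  have : NeZero n := ⟨Nat.one_le_iff_ne_zero.1 hn⟩
  have hmin : ∀ i, zmin ≤ z i := fun i => hzmin ▸ inf'_le z (mem_univ i)
  set s : Finset (Fin n) := univ.filter fun i => z i = zmin with hs_def
  have mem_s : ∀ i, i ∈ s ↔ z i = zmin := fun i => by simp [hs_def]
  have hs : s.Nonempty := by
    obtain ⟨j, -, hj⟩ := exists_mem_eq_inf' ⟨⟨0, hn⟩, mem_univ _⟩ z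
    exact ⟨j, (mem_s j).2 (hj.symm.trans hzmin.symm)⟩
  obtain rfl : p = s.centroidWeightsIndicator ℝ := by
    ext i
    simp [hp, centroidWeightsIndicator_def, Set.indicator_apply, mem_s, hk]
  subst hk
  have hopt : droOPT n ρ z = zmin ↔ (n : ℝ) * (n - #s) / (2 * #s) ≤ ρ := by
    rw [droOPT_eq_iff_exists hρ hmin, ← centroidWeightsIndicator_mem_chiSqBall_iff hs,
      ← exists_mem_chiSqBall_forall_notMem_eq_zero_iff hs]
    simp only [mem_s, ne_eq]
  refine ⟨hopt, fun h => ⟨(centroidWeightsIndicator_mem_chiSqBall_iff hs).2 h, ?_, ?_⟩⟩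
  · have hsimplex := centroidWeightsIndicator_mem_stdSimplex ℝ hs
    rw [hopt.2 h, sum_mul_eq_iff_of_mem_stdSimplex hsimplex hmin]
    exact fun i hi => centroidWeightsIndicator_of_notMem ℝ ((mem_s i).not.2 hi)
  · simpa only [chiSqDiv, Fintype.card_fin] using chiSqDiv_centroidWeightsIndicator (𝕜 := ℝ) hs
end

section
/- Let n ≥ 1 be an integer, let z ∈ ℝⁿ attain at least ℓ distinct values (ℓ ≥ 1), and suppose 0 ≤ ρ ≤ (ℓ − 1)/2. Then every minimizer p of p ↦ ∑_{i=1}^n p_i z_i over P_{ρ,n} has tight χ² constraint, i.e. satisfies (1/2)∑_{i=1}^n (n p_i − 1)² = ρ. -/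
/-!
If the constraint were slack at a minimizer `p`, it would be slack near `p`, so `p` would minimize
the linear objective locally, hence globally, over the whole simplex. Such a `p` is carried by the
indices where `z` is minimal, so at least `ℓ - 1` of its coordinates vanish. Each of them
contributes `(n · 0 - 1)² / 2 = 1 / 2` to the divergence, which is therefore at least
`(ℓ - 1) / 2 ≥ ρ`. The same argument applies to any constraint `∑ φ (p i) ≤ ρ` with `φ ≥ 0`
continuous: the χ² divergence only enters through `φ 0 = 1 / 2`.
-/

theorem isMinOn_of_isMinOn_inter_of_lt {E β γ : Type*} [AddCommGroup E] [TopologicalSpace E]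
    [Module ℝ E] [IsTopologicalAddGroup E] [ContinuousSMul ℝ E] [AddCommGroup β] [PartialOrder β]
    [IsOrderedAddMonoid β] [Module ℝ β] [IsOrderedModule ℝ β] [PosSMulReflectLE ℝ β]
    [TopologicalSpace γ] [LinearOrder γ] [OrderTopology γ] {s : Set E} {f : E → β} {g : E → γ}
    {a : E} {c : γ} (hf : ConvexOn ℝ s f) (has : a ∈ s) (hg : ContinuousWithinAt g s a)
    (hlt : g a < c) (hmin : IsMinOn f {x ∈ s | g x ≤ c} a) : IsMinOn f s a := by
  have hlocal : IsLocalMinOn f s a := by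
    filter_upwards [self_mem_nhdsWithin, hg.eventually_lt_const hlt] with x hxs hx
    exact hmin ⟨hxs, hx.le⟩
  exact IsMinOn.of_isLocalMinOn_of_convexOn has hlocal hf

theorem le_of_isMinOn_stdSimplex {R ι : Type*} [Semiring R] [LinearOrder R] [IsStrictOrderedRing R]
    [Fintype ι] {z p : ι → R} (hp : p ∈ stdSimplex R ι)
    (hmin : IsMinOn (fun q ↦ ∑ i, q i * z i) (stdSimplex R ι) p) {i : ι} (hi : p i ≠ 0) (j : ι) :
    z i ≤ z j := by
  classical
  have : Nonempty ι := ⟨i⟩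
  obtain ⟨k, hk⟩ := Finite.exists_min z
  refine le_trans ?_ (hk j)
  by_contra! hki
  have hvertex : ∑ m, p m * z m ≤ z k := by
    simpa [Pi.single_apply] using hmin (single_mem_stdSimplex R k)
  have hpi : 0 < p i := (hp.1 i).lt_of_ne' hi
  refine hvertex.not_gt ?_
  calc z k = ∑ m, p m * z k := by rw [← Finset.sum_mul, hp.2, one_mul]
    _ < ∑ m, p m * z m :=
      Finset.sum_lt_sum (fun m _ ↦ mul_le_mul_of_nonneg_left (hk m) (hp.1 m))
        ⟨i, Finset.mem_univ i, mul_lt_mul_of_pos_left hki hpi⟩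

theorem card_image_le_card_filter_add_one {α β : Type*} [DecidableEq β] {s : Finset α} {f : α → β}
    {P : α → Prop} [DecidablePred P]
    (hf : ∀ a ∈ s, ¬P a → ∀ b ∈ s, ¬P b → f a = f b) :
    (s.image f).card ≤ (s.filter P).card + 1 := by
  classical
  have hconst : ((s.filter (¬P ·)).image f).card ≤ 1 := by
    simp only [Finset.card_le_one, Finset.forall_mem_image, Finset.mem_filter]
    exact fun a ha b hb ↦ hf a ha.1 ha.2 b hb.1 hb.2
  calc (s.image f).card
      = ((s.filter P).image f ∪ (s.filter (¬P ·)).image f).card := by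
        rw [← Finset.image_union, Finset.filter_union_filter_not_eq]
    _ ≤ ((s.filter P).image f).card + ((s.filter (¬P ·)).image f).card := Finset.card_union_le _ _
    _ ≤ (s.filter P).card + 1 := add_le_add Finset.card_image_le hconst

theorem card_filter_eq_zero_nsmul_le_sum {ι R M : Type*} [Zero R] [DecidableEq R]
    [AddCommMonoid M] [PartialOrder M] [IsOrderedAddMonoid M] {s : Finset ι} {p : ι → R}
    {φ : R → M} (hφ : ∀ i ∈ s, 0 ≤ φ (p i)) :
    (s.filter (p · = 0)).card • φ 0 ≤ ∑ i ∈ s, φ (p i) :=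
  calc (s.filter (p · = 0)).card • φ 0
      = ∑ i ∈ s.filter (p · = 0), φ (p i) := by
        rw [Finset.sum_congr rfl fun i hi ↦ by rw [(Finset.mem_filter.1 hi).2], Finset.sum_const]
    _ ≤ ∑ i ∈ s, φ (p i) :=
        Finset.sum_le_sum_of_subset_of_nonneg (s.filter_subset _) fun i hi _ ↦ hφ i hi

theorem card_image_sub_one_mul_le_sum_of_isMinOn_stdSimplex {ι : Type*} [Fintype ι] {z p : ι → ℝ}
    {φ : ℝ → ℝ} (hφ : ∀ t ∈ Set.Icc 0 1, 0 ≤ φ t) (hp : p ∈ stdSimplex ℝ ι)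
    (hmin : IsMinOn (fun q ↦ ∑ i, q i * z i) (stdSimplex ℝ ι) p) :
    (((Finset.univ.image z).card : ℝ) - 1) * φ 0 ≤ ∑ i, φ (p i) := by
  have hcard : (Finset.univ.image z).card ≤ (Finset.univ.filter (p · = 0)).card + 1 :=
    card_image_le_card_filter_add_one fun i _ hi j _ hj ↦
      (le_of_isMinOn_stdSimplex hp hmin hi j).antisymm (le_of_isMinOn_stdSimplex hp hmin hj i)
  calc (((Finset.univ.image z).card : ℝ) - 1) * φ 0
      ≤ (Finset.univ.filter (p · = 0)).card * φ 0 :=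
        mul_le_mul_of_nonneg_right (sub_le_iff_le_add.2 (mod_cast hcard))
          (hφ 0 ⟨le_rfl, zero_le_one⟩)
    _ ≤ ∑ i, φ (p i) := by
        rw [← nsmul_eq_mul]
        exact card_filter_eq_zero_nsmul_le_sum fun i _ ↦ hφ _ (mem_Icc_of_mem_stdSimplex hp i)

theorem stmt11_general {ι : Type*} [Fintype ι] {z : ι → ℝ} {φ : ℝ → ℝ} {ρ : ℝ}
    (hφc : ContinuousOn φ (Set.Icc 0 1)) (hφ : ∀ t ∈ Set.Icc 0 1, 0 ≤ φ t)
    (hρ : ρ ≤ (((Finset.univ.image z).card : ℝ) - 1) * φ 0) {p : ι → ℝ}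
    (hp : p ∈ {q ∈ stdSimplex ℝ ι | ∑ i, φ (q i) ≤ ρ})
    (hmin : IsMinOn (fun q ↦ ∑ i, q i * z i) {q ∈ stdSimplex ℝ ι | ∑ i, φ (q i) ≤ ρ} p) :
    ∑ i, φ (p i) = ρ := by
  refine hp.2.antisymm (not_lt.1 fun hlt ↦ ?_)
  have hcont : ContinuousOn (fun q ↦ ∑ i, φ (q i)) (stdSimplex ℝ ι) :=
    continuousOn_finsetSum _ fun i _ ↦
      hφc.comp (continuous_apply i).continuousOn fun q hq ↦ mem_Icc_of_mem_stdSimplex hq i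
  have hglobal : IsMinOn (fun q ↦ ∑ i, q i * z i) (stdSimplex ℝ ι) p :=
    isMinOn_of_isMinOn_inter_of_lt
      ((Fintype.linearCombination ℝ z).convexOn (convex_stdSimplex ℝ ι)) hp.1 (hcont p hp.1) hlt
      hmin
  exact hlt.not_ge
    (hρ.trans (card_image_sub_one_mul_le_sum_of_isMinOn_stdSimplex hφ hp.1 hglobal))

theorem chiSqBall_eq_stdSimplex_inter (n : ℕ) (ρ : ℝ) :
    chiSqBall n ρ = {p ∈ stdSimplex ℝ (Fin n) | ∑ i, 1 / 2 * ((n : ℝ) * p i - 1) ^ 2 ≤ ρ} := by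
  ext p
  simp only [chiSqBall, stdSimplex, Finset.mul_sum, Set.mem_ofPred_eq, and_assoc]

theorem stmt11 (n : ℕ) (hn : 1 ≤ n) (ℓ : ℕ) (hℓ : 1 ≤ ℓ) (z : Fin n → ℝ)
    (hdist : ℓ ≤ (Finset.univ.image z).card)
    (ρ : ℝ) (hρ0 : 0 ≤ ρ) (hρ : ρ ≤ ((ℓ : ℝ) - 1) / 2) :
    ∀ p ∈ chiSqBall n ρ,
      (∀ q ∈ chiSqBall n ρ, ∑ i, p i * z i ≤ ∑ i, q i * z i) →
      (1/2) * ∑ i, ((n : ℝ) * p i - 1)^2 = ρ := by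
  have hℓ_cast : (ℓ : ℝ) ≤ (Finset.univ.image z).card := mod_cast hdist
  simp only [chiSqBall_eq_stdSimplex_inter, Finset.mul_sum]
  exact fun p hp hmin ↦ stmt11_general (φ := fun t ↦ 1 / 2 * ((n : ℝ) * t - 1) ^ 2)
    (by fun_prop) (fun t _ ↦ by positivity) (by linarith) hp hmin
end

section
/- Let f be a monotone, submodular, normalized set function on a finite ground set V with f({i}) ≤ b for every i ∈ V, and let F be its multilinear extension. Then F is b-Lipschitz in the ℓ1 norm: |F(x) − F(x′)| ≤ b·∑_{i∈V} |x_i − x′_i| for all x, x′ ∈ [0,1]^V. -/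
/-- The multilinear extension of a set function. -/
noncomputable def multilinearExt {V : Type*} [Fintype V] [DecidableEq V]
    (f : Finset V → ℝ) (x : V → ℝ) : ℝ :=
  ∑ S : Finset V, f S * ((∏ i ∈ S, x i) * ∏ j ∈ Sᶜ, (1 - x j))

/-!
The partial derivative of the multilinear extension `F` in the direction `v` is the multilinear
extension of the marginal `S ↦ f (S ∪ {v}) - f (S ∖ {v})`. On the cube a multilinear extension is
an average of values of its set function, so bounds on the marginals carry over to the partial
derivatives. Changing one coordinate at a time then gives the `ℓ¹` estimate. For a monotone
submodular normalized `f`, every marginal in the direction `v` lies in `[0, f {v}]`.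
-/

open Finset Function

theorem dist_le_sum_of_dist_update_le {ι E : Type*} [Fintype ι] [DecidableEq ι]
    [PseudoMetricSpace E] {α : ι → Type*} {F : (∀ i, α i) → E} {s : ∀ i, Set (α i)}
    {δ : ∀ i, α i → α i → ℝ}
    (h : ∀ x ∈ Set.univ.pi s, ∀ i, ∀ t ∈ s i, dist (F x) (F (update x i t)) ≤ δ i (x i) t)
    {x y : ∀ i, α i} (hx : x ∈ Set.univ.pi s) (hy : y ∈ Set.univ.pi s) :
    dist (F x) (F y) ≤ ∑ i, δ i (x i) (y i) := by
  suffices hybrid : ∀ A : Finset ι, dist (F x) (F (A.piecewise y x)) ≤ ∑ i ∈ A, δ i (x i) (y i) by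
    simpa only [piecewise_univ] using hybrid univ
  intro A
  induction A using Finset.induction_on with
  | empty => simp
  | insert a A ha ih =>
    have hmem : A.piecewise y x ∈ Set.univ.pi s := A.piecewise_mem_set_pi hy hx
    have hstep := h _ hmem a (y a) (hy a (Set.mem_univ a))
    rw [piecewise_eq_of_notMem _ _ _ ha] at hstep
    rw [piecewise_insert, sum_insert ha, add_comm]
    exact (dist_triangle _ _ _).trans (add_le_add ih hstep)

section SetFunction

variable {V : Type*} [DecidableEq V] {f : Finset V → ℝ}

/-- The marginal contribution of `v` to the set function `f`. Erasing `v` from the second argument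
makes it a function of all sets, independent of whether `v` belongs to the set. -/
def marginal (f : Finset V → ℝ) (v : V) (S : Finset V) : ℝ :=
  f (insert v S) - f (S.erase v)

theorem marginal_insert (f : Finset V → ℝ) (v : V) (S : Finset V) :
    marginal f v (insert v S) = marginal f v S := by
  rw [marginal, marginal, insert_idem, erase_insert_eq_erase]

theorem marginal_of_notMem {v : V} {S : Finset V} (hv : v ∉ S) :
    marginal f v S = f (insert v S) - f S := by
  rw [marginal, erase_eq_of_notMem hv]

theorem marginal_nonneg (hf : Monotone f) (v : V) (S : Finset V) : 0 ≤ marginal f v S :=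
  sub_nonneg.2 (hf ((S.erase_subset v).trans (S.subset_insert v)))

theorem marginal_le_marginal_empty
    (hf : ∀ S T : Finset V, ∀ v : V, S ⊆ T → v ∉ T →
      f (insert v T) - f T ≤ f (insert v S) - f S) (v : V) (S : Finset V) :
    marginal f v S ≤ marginal f v ∅ := by
  have hinsert : insert v (S.erase v) = insert v S := by grind
  have h := hf ∅ (S.erase v) v (empty_subset _) (notMem_erase v S)
  rwa [hinsert, ← marginal_of_notMem (notMem_empty v)] at h

end SetFunction

section MultilinearExtension

variable {V : Type*} [Fintype V] [DecidableEq V]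

theorem abs_multilinearExt_le {g : Finset V → ℝ} {c : ℝ} (hg : ∀ S, |g S| ≤ c) {x : V → ℝ}
    (hx : ∀ i, x i ∈ Set.Icc (0 : ℝ) 1) : |multilinearExt g x| ≤ c := by
  set w : Finset V → ℝ := fun S ↦ (∏ i ∈ S, x i) * ∏ j ∈ Sᶜ, (1 - x j)
  have hw_nonneg (S : Finset V) : 0 ≤ w S :=
    mul_nonneg (prod_nonneg fun i _ ↦ (hx i).1) (prod_nonneg fun j _ ↦ sub_nonneg.2 (hx j).2)
  have hw_sum : ∑ S, w S = 1 := by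
    rw [← Fintype.prod_add]
    simp only [add_sub_cancel, prod_const_one]
  calc |multilinearExt g x| ≤ ∑ S, |g S * w S| := abs_sum_le_sum_abs _ _
    _ = ∑ S, |g S| * w S := by simp only [abs_mul, abs_of_nonneg (hw_nonneg _)]
    _ ≤ ∑ S, c * w S := sum_le_sum fun S _ ↦ mul_le_mul_of_nonneg_right (hg S) (hw_nonneg S)
    _ = c := by rw [← mul_sum, hw_sum, mul_one]

theorem multilinearExt_eq_sum_powerset_erase (f : Finset V → ℝ) (x : V → ℝ) (v : V) :
    multilinearExt f x = ∑ S ∈ (univ.erase v).powerset,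
      ((1 - x v) * f S + x v * f (insert v S)) *
        ((∏ i ∈ S, x i) * ∏ j ∈ univ.erase v \ S, (1 - x j)) := by
  rw [multilinearExt, ← powerset_univ, ← insert_erase (mem_univ v),
    sum_powerset_insert (notMem_erase v _), ← sum_add_distrib, insert_erase (mem_univ v)]
  refine sum_congr rfl fun S hS ↦ ?_
  have hv : v ∉ S := fun h ↦ notMem_erase v univ (mem_powerset.1 hS h)
  have hcompl_insert : (insert v S)ᶜ = univ.erase v \ S := by
    rw [compl_insert, compl_eq_univ_sdiff, erase_sdiff_comm]
  have hcompl : Sᶜ = insert v (univ.erase v \ S) := by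
    rw [← hcompl_insert, insert_compl_insert hv]
  rw [hcompl_insert, hcompl, prod_insert (by simp), prod_insert hv]
  ring

theorem multilinearExt_sub_multilinearExt_update (f : Finset V → ℝ) (x : V → ℝ) (v : V) (t : ℝ) :
    multilinearExt f x - multilinearExt f (update x v t) =
      (x v - t) * multilinearExt (marginal f v) x := by
  simp only [multilinearExt_eq_sum_powerset_erase _ _ v, update_self]
  rw [← sum_sub_distrib, mul_sum]
  refine sum_congr rfl fun S hS ↦ ?_
  have hv : v ∉ S := fun h ↦ notMem_erase v univ (mem_powerset.1 hS h)
  have hprod : ∏ i ∈ S, update x v t i = ∏ i ∈ S, x i := prod_update_of_notMem hv x t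
  have hprod_sdiff : ∏ j ∈ univ.erase v \ S, (1 - update x v t j) =
      ∏ j ∈ univ.erase v \ S, (1 - x j) :=
    prod_congr rfl fun j hj ↦ by rw [update_of_ne (ne_of_mem_erase (mem_sdiff.1 hj).1)]
  rw [hprod, hprod_sdiff, marginal_insert, marginal_of_notMem hv]
  ring

end MultilinearExtension

theorem stmt15_general {V : Type*} [Fintype V] [DecidableEq V] {f : Finset V → ℝ} {c : V → ℝ}
    (hc : ∀ v S, |marginal f v S| ≤ c v) {x x' : V → ℝ}
    (hx : ∀ i, x i ∈ Set.Icc (0 : ℝ) 1) (hx' : ∀ i, x' i ∈ Set.Icc (0 : ℝ) 1) :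
    |multilinearExt f x - multilinearExt f x'| ≤ ∑ i, c i * |x i - x' i| := by
  refine dist_le_sum_of_dist_update_le (F := multilinearExt f) (s := fun _ ↦ Set.Icc 0 1)
    (δ := fun i s t ↦ c i * |s - t|) (fun y hy i t _ ↦ ?_) (fun i _ ↦ hx i) (fun i _ ↦ hx' i)
  rw [Real.dist_eq, multilinearExt_sub_multilinearExt_update, abs_mul, mul_comm]
  gcongr
  exact abs_multilinearExt_le (hc i) fun j ↦ hy j (Set.mem_univ j)

theorem stmt15 {V : Type*} [Fintype V] [DecidableEq V]
    (f : Finset V → ℝ) (b : ℝ)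
    (hnorm : f ∅ = 0)
    (hmono : ∀ S T : Finset V, S ⊆ T → f S ≤ f T)
    (hsub : ∀ S T : Finset V, ∀ v : V, S ⊆ T → v ∉ T →
      f (insert v T) - f T ≤ f (insert v S) - f S)
    (hb : ∀ i : V, f {i} ≤ b) :
    ∀ x x' : V → ℝ, (∀ i, x i ∈ Set.Icc (0 : ℝ) 1) → (∀ i, x' i ∈ Set.Icc (0 : ℝ) 1) →
      |multilinearExt f x - multilinearExt f x'| ≤ b * ∑ i, |x i - x' i| := by
  have hmarginal (v : V) (S : Finset V) : |marginal f v S| ≤ b := by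
    rw [abs_of_nonneg (marginal_nonneg hmono v S)]
    calc marginal f v S ≤ marginal f v ∅ := marginal_le_marginal_empty hsub v S
      _ = f {v} := by rw [marginal, insert_empty_eq, erase_empty, hnorm, sub_zero]
      _ ≤ b := hb v
  intro x x' hx hx'
  rw [mul_sum]
  exact stmt15_general hmarginal hx hx'
end
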